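/- arXiv:1003.5353 — 4 statements merged into one kernel-verified Lean document; each statement's English description precedes it below -/
import Mathlib

section
/- For every nonnegative integer r and every integer i, one has (ad Y)^r (L_i) = Σ_{q=0}^{2r} α^q · r! · a_q(r,i) · L_{i+(r-q)m}, where ad Y is the map z ↦ Yz − zY. -/
/-!
Write `D = ad L_{-m}` and `E = ad L_m`. Formally `ad Y = exp(αD) E exp(-αD)`, so
`(ad Y)^r = exp(αD) E^r exp(-αD)`, and the divided powers of `D` and the powers of `E` act on
basis vectors by
`D^p/p! : L_j ↦ [j+m; p]_m L_{j-pm}` and `E^r : L_j ↦ r! [j+(r-2)m; r]_m L_{j+rm}`.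
Reading off the coefficient of `α^q` gives the sum `a_q(r,i)`.

The exponential series need not make sense in `A`, so the argument is carried out on coefficients,
by induction on `r`. The intertwining relation `exp(αD) E = (ad Y) exp(αD)` becomes the scalar
identity `gb_intertwine`, which holds for each summand `p` of `a_q` separately and yields the
recursion `aC_succ_zero`, `aC_succ_one`, `aC_succ_add_two` expressing `a_q(r+1,i)` through
`a_q(r,i)`, `a_{q-1}(r,i)`, `a_{q-2}(r,i)`. At `r = 0` the relation `exp(αD) exp(-αD) = 1` is the
vanishing of an alternating sum of binomial coefficients (`aC_zero_succ`), and the recursion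
propagates this to `a_q(r,i) = 0` for `q > 2r` (`aC_eq_zero`).
-/

noncomputable section

variable {F : Type*} [Field F] [CharZero F]

/- Generalized binomial coefficient [a; r]_k = a(a-k)(a-2k)⋯(a-(r-1)k)/r!, with [a; 0]_k = 1. -/
def gb (a k : F) (r : ℕ) : F :=
  (∏ j ∈ Finset.range r, (a - (j : F) * k)) / (r.factorial : F)

/- x_a^{<r>} = (x+a)(x+a+1)⋯(x+a+r-1), empty product equal to 1. -/
def ascF {A : Type*} [Ring A] [Algebra F A] (x : A) (a : F) (r : ℕ) : A :=
  ((List.range r).map fun j : ℕ => x + algebraMap F A (a + (j : F))).prod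

/- x_a^{[r]} = (x+a)(x+a-1)⋯(x+a-r+1), empty product equal to 1. -/
def descF {A : Type*} [Ring A] [Algebra F A] (x : A) (a : F) (r : ℕ) : A :=
  ((List.range r).map fun j : ℕ => x + algebraMap F A (a - (j : F))).prod

/- a_s(r,i) = Σ_{p=0}^{s} (−1)^p [i+m; p]_m [i+(r−p−2)m; r]_m [i+(r−p+1)m; s−p]_m. -/
def aC (m : F) (r s : ℕ) (i : F) : F :=
  ∑ p ∈ Finset.range (s + 1),
    (-1 : F) ^ p * gb (i + m) m p * gb (i + ((r : F) - (p : F) - 2) * m) m r *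
      gb (i + ((r : F) - (p : F) + 1) * m) m (s - p)

/- b_s(r,k) = Σ_{p=0}^{s} (−1)^p [k+m/2; p]_m [k+(r−p−3/2)m; r]_m [k+(r−p+1/2)m; s−p]_m. -/
def bC (m : F) (r s : ℕ) (k : F) : F :=
  ∑ p ∈ Finset.range (s + 1),
    (-1 : F) ^ p * gb (k + m / 2) m p * gb (k + ((r : F) - (p : F) - 3 / 2) * m) m r *
      gb (k + ((r : F) - (p : F) + 1 / 2) * m) m (s - p)

lemma gb_zero (a k : F) : gb a k 0 = 1 := by simp [gb]

/-- Peels off the last factor of the product. -/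
lemma gb_succ (a k : F) (r : ℕ) :
    ((r : F) + 1) * gb a k (r + 1) = gb a k r * (a - r * k) := by
  have h1 : ((r : F) + 1) ≠ 0 := by exact_mod_cast Nat.succ_ne_zero r
  have h2 : (r.factorial : F) ≠ 0 := by exact_mod_cast r.factorial_ne_zero
  simp only [gb, Finset.prod_range_succ, Nat.factorial_succ, Nat.cast_mul, Nat.cast_succ]
  generalize ∏ j ∈ Finset.range r, (a - (j : F) * k) = P
  field_simp

/-- Peels off the first factor of the product. -/
lemma gb_succ' (a k : F) (r : ℕ) :
    ((r : F) + 1) * gb a k (r + 1) = a * gb (a - k) k r := by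
  have h1 : ((r : F) + 1) ≠ 0 := by exact_mod_cast Nat.succ_ne_zero r
  have h2 : (r.factorial : F) ≠ 0 := by exact_mod_cast r.factorial_ne_zero
  have h3 : ∏ j ∈ Finset.range r, (a - ((j + 1 : ℕ) : F) * k)
      = ∏ j ∈ Finset.range r, (a - k - (j : F) * k) :=
    Finset.prod_congr rfl fun j _ => by push_cast; ring
  rw [gb, gb, Finset.prod_range_succ', h3, Nat.factorial_succ, Nat.cast_mul, Nat.cast_succ]
  generalize ∏ j ∈ Finset.range r, (a - k - (j : F) * k) = P
  rw [Nat.cast_zero, zero_mul, sub_zero]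
  field_simp

lemma gb_one (a k : F) : gb a k 1 = a := by simp [gb]

/-- The coefficient of `α^(s+2)` in `exp(αD) E = (ad Y) exp(αD)`, evaluated on `L_j`. -/
lemma gb_intertwine (j m : F) (s : ℕ) :
    (j - m) * gb (j + 2 * m) m (s + 2)
      = (j - ((s : F) + 3) * m) * gb (j + m) m (s + 2)
        + 2 * m * (j - ((s : F) + 1) * m) * gb (j + m) m (s + 1)
        + m ^ 2 * (j - (s : F) * m + m) * gb (j + m) m s := by
  have h2 : ((s : F) + 2) ≠ 0 := by exact_mod_cast Nat.succ_ne_zero (s + 1)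
  have e1 := gb_succ' (j + 2 * m) m (s + 1)
  have e2 := gb_succ (j + m) m (s + 1)
  have e3 := gb_succ (j + m) m s
  rw [show j + 2 * m - m = j + m by ring] at e1
  push_cast at e1 e2
  apply mul_left_cancel₀ h2
  linear_combination (j - m) * e1 - (j - ((s : F) + 3) * m) * e2 + m ^ 2 * (s + 2) * e3

/-- `D^p/p! · D^s/s! = C(p+s, p) D^(p+s)/(p+s)!`, evaluated on a basis vector. -/
lemma gb_mul_gb (a k : F) (p s : ℕ) :
    gb a k p * gb (a - p * k) k s = ((p + s).choose p : F) * gb a k (p + s) := by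
  have h1 : (p.factorial : F) ≠ 0 := by exact_mod_cast p.factorial_ne_zero
  have h2 : (s.factorial : F) ≠ 0 := by exact_mod_cast s.factorial_ne_zero
  have h3 : ((p + s).factorial : F) ≠ 0 := by exact_mod_cast (p + s).factorial_ne_zero
  have h4 : ∏ j ∈ Finset.range s, (a - ((p + j : ℕ) : F) * k)
      = ∏ j ∈ Finset.range s, (a - p * k - (j : F) * k) :=
    Finset.prod_congr rfl fun j _ => by push_cast; ring
  rw [Nat.cast_add_choose]
  simp only [gb, Finset.prod_range_add, h4]
  generalize ∏ j ∈ Finset.range s, (a - p * k - (j : F) * k) = P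
  generalize ∏ j ∈ Finset.range p, (a - (j : F) * k) = Q
  field_simp

lemma aC_zero_zero (m i : F) : aC m 0 0 i = 1 := by simp [aC, gb]

lemma aC_zero_succ (m i : F) (q : ℕ) : aC m 0 (q + 1) i = 0 := by
  have key : aC m 0 (q + 1) i
      = ∑ p ∈ Finset.range (q + 1 + 1),
          ((-1 : F) ^ p * ((q + 1).choose p : F)) * gb (i + m) m (q + 1) := by
    refine Finset.sum_congr rfl fun p hp => ?_
    have hp' : p + (q + 1 - p) = q + 1 := by
      have := Finset.mem_range.1 hp
      omega
    have h := gb_mul_gb (i + m) m p (q + 1 - p)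
    rw [hp'] at h
    rw [gb_zero, show i + (((0 : ℕ) : F) - (p : F) + 1) * m = i + m - p * m by push_cast; ring]
    linear_combination (-1 : F) ^ p * h
  have h0 : ∑ p ∈ Finset.range (q + 1 + 1), (-1 : F) ^ p * ((q + 1).choose p : F) = 0 := by
    have := Int.alternating_sum_range_choose_of_ne (Nat.succ_ne_zero q)
    exact_mod_cast congrArg (Int.cast : ℤ → F) this
  rw [key, ← Finset.sum_mul, h0, zero_mul]

/-- The part of the `p`-th summand of `a_q(r,i)` that does not depend on `q`: up to the factor
`r!`, the coefficient of `α^p L_{i+(r-p)m}` in `E^r exp(-αD) L_i`. -/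
def aHead (m : F) (r : ℕ) (i : F) (p : ℕ) : F :=
  (-1 : F) ^ p * gb (i + m) m p * gb (i + ((r : F) - (p : F) - 2) * m) m r

lemma aC_eq (m : F) (r s : ℕ) (i : F) :
    aC m r s i = ∑ p ∈ Finset.range (s + 1),
      aHead m r i p * gb (i + ((r : F) - (p : F)) * m + m) m (s - p) := by
  refine Finset.sum_congr rfl fun p _ => ?_
  rw [aHead, show i + ((r : F) - (p : F)) * m + m = i + ((r : F) - (p : F) + 1) * m by ring]

/-- One more application of `E`. -/
lemma aHead_succ (m : F) (r : ℕ) (i : F) (p : ℕ) :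
    ((r : F) + 1) * aHead m (r + 1) i p
      = aHead m r i p * (i + ((r : F) - (p : F)) * m - m) := by
  have h := gb_succ' (i + ((r : F) + 1 - (p : F) - 2) * m) m r
  rw [show i + ((r : F) + 1 - (p : F) - 2) * m - m = i + ((r : F) - (p : F) - 2) * m by ring] at h
  simp only [aHead, Nat.cast_succ]
  linear_combination (-1 : F) ^ p * gb (i + m) m p * h

lemma aC_succ_eq (m : F) (r s : ℕ) (i : F) :
    ((r : F) + 1) * aC m (r + 1) s i = ∑ p ∈ Finset.range (s + 1),
      aHead m r i p * ((i + ((r : F) - (p : F)) * m - m) *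
        gb (i + ((r : F) - (p : F)) * m + 2 * m) m (s - p)) := by
  rw [aC_eq, Finset.mul_sum]
  refine Finset.sum_congr rfl fun p _ => ?_
  rw [← mul_assoc, aHead_succ, Nat.cast_succ,
    show i + ((r : F) + 1 - (p : F)) * m + m = i + ((r : F) - (p : F)) * m + 2 * m by ring]
  ring

lemma aC_succ_zero (m : F) (r : ℕ) (i : F) :
    ((r : F) + 1) * aC m (r + 1) 0 i = (i + (r : F) * m - m) * aC m r 0 i := by
  rw [aC_succ_eq, aC_eq]
  simp [gb_zero]
  ring

lemma aC_succ_one (m : F) (r : ℕ) (i : F) :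
    ((r : F) + 1) * aC m (r + 1) 1 i
      = (i + ((r : F) - 1) * m - m) * aC m r 1 i + 2 * m * (i + (r : F) * m) * aC m r 0 i := by
  rw [aC_succ_eq, aC_eq, aC_eq]
  simp [Finset.sum_range_succ, gb_zero, gb_one]
  ring

lemma aC_succ_add_two (m : F) (r q : ℕ) (i : F) :
    ((r : F) + 1) * aC m (r + 1) (q + 2) i
      = (i + ((r : F) - ((q : F) + 2)) * m - m) * aC m r (q + 2) i
        + 2 * m * (i + ((r : F) - ((q : F) + 1)) * m) * aC m r (q + 1) i
        + m ^ 2 * (i + ((r : F) - (q : F)) * m + m) * aC m r q i := by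
  have hsum : ∀ p ∈ Finset.range (q + 1),
      aHead m r i p * ((i + ((r : F) - (p : F)) * m - m) *
        gb (i + ((r : F) - (p : F)) * m + 2 * m) m (q + 2 - p))
      = (i + ((r : F) - ((q : F) + 2)) * m - m) *
          (aHead m r i p * gb (i + ((r : F) - (p : F)) * m + m) m (q + 2 - p))
        + 2 * m * (i + ((r : F) - ((q : F) + 1)) * m) *
          (aHead m r i p * gb (i + ((r : F) - (p : F)) * m + m) m (q + 1 - p))
        + m ^ 2 * (i + ((r : F) - (q : F)) * m + m) *
          (aHead m r i p * gb (i + ((r : F) - (p : F)) * m + m) m (q - p)) := by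
    intro p hp
    obtain ⟨s, rfl⟩ := Nat.exists_eq_add_of_le (Nat.lt_succ_iff.1 (Finset.mem_range.1 hp))
    rw [show p + s + 2 - p = s + 2 by omega, show p + s + 1 - p = s + 1 by omega,
      show p + s - p = s by omega, gb_intertwine]
    push_cast
    ring
  -- The summands `p = q + 1` and `p = q + 2` involve `gb` only at orders `1` and `0`.
  rw [aC_succ_eq, aC_eq, aC_eq, aC_eq, Finset.sum_range_succ _ (q + 2),
    Finset.sum_range_succ _ (q + 1), Finset.sum_congr rfl hsum, Finset.sum_range_succ _ (q + 2),
    Finset.sum_range_succ _ (q + 1), Finset.sum_range_succ _ (q + 1), Finset.sum_add_distrib,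
    Finset.sum_add_distrib, ← Finset.mul_sum, ← Finset.mul_sum, ← Finset.mul_sum]
  rw [show q + 2 - (q + 1) = 1 by omega, Nat.sub_self, Nat.sub_self]
  simp only [gb_zero, gb_one]
  push_cast
  ring

lemma aC_eq_zero (m i : F) (r : ℕ) : ∀ q, 2 * r < q → aC m r q i = 0 := by
  induction r with
  | zero =>
    intro q hq
    obtain ⟨s, rfl⟩ := Nat.exists_eq_succ_of_ne_zero (by omega : q ≠ 0)
    exact aC_zero_succ m i s
  | succ r ih =>
    intro q hq
    obtain ⟨s, rfl⟩ := Nat.exists_eq_add_of_le' (by omega : 2 ≤ q)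
    have h1 : ((r : F) + 1) ≠ 0 := by exact_mod_cast Nat.succ_ne_zero r
    apply mul_left_cancel₀ h1
    rw [aC_succ_add_two, ih _ (by omega), ih _ (by omega), ih _ (by omega)]
    ring

/-- The action of `ad Y` on a basis vector. -/
lemma ad_Y_apply {A : Type*} [Ring A] [Algebra F A] (L : ℤ → A)
    (hL : ∀ i j : ℤ, L i * L j - L j * L i = ((j - i : ℤ) : F) • L (i + j))
    (m : ℤ) (b c : F) (j : ℤ) :
    (L m + b • L 0 + c • L (-m)) * L j - L j * (L m + b • L 0 + c • L (-m))
      = ((j : F) - m) • L (j + m) + (b * j) • L j + (c * ((j : F) + m)) • L (j - m) := by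
  have h1 := hL m j
  have h2 := hL 0 j
  have h3 := hL (-m) j
  rw [add_comm m j] at h1
  rw [zero_add] at h2
  rw [show -m + j = j - m by ring] at h3
  push_cast at h1 h2 h3
  rw [sub_zero] at h2
  rw [sub_neg_eq_add] at h3
  rw [← h1, mul_smul, ← h2, mul_smul, ← h3]
  simp only [add_mul, mul_add, smul_mul_assoc, mul_smul_comm, smul_sub]
  abel

/-- In a unital associative `F`-algebra `A` (char `F` = 0) with Witt family `L`:
`(ad Y)^r (L_i) = Σ_{q=0}^{2r} α^q · r! · a_q(r,i) · L_{i+(r-q)m}` where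
`Y = exp(α ad L_{−m})(L_m) = L_m + 2αm L_0 + α²m² L_{−m}` and `ad Y : z ↦ Yz − zY`. -/
theorem stmt2 {A : Type*} [Ring A] [Algebra F A] (L : ℤ → A)
    (hL : ∀ i j : ℤ, L i * L j - L j * L i = ((j - i : ℤ) : F) • L (i + j))
    (m : ℤ) (hm : m ≠ 0) (α : F)
    (Y : A) (hY : Y = L m + (2 * α * (m : F)) • L 0 + (α ^ 2 * (m : F) ^ 2) • L (-m))
    (r : ℕ) (i : ℤ) :
    (fun z => Y * z - z * Y)^[r] (L i)
      = ∑ q ∈ Finset.range (2 * r + 1),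
          (α ^ q * (r.factorial : F) * aC (m : F) r q (i : F)) •
            L (i + ((r : ℤ) - (q : ℤ)) * m) := by
  induction r with
  | zero => simp [aC_zero_zero]
  | succ r ih =>
    rw [Function.iterate_succ_apply', ih]
    set c : ℕ → F := fun q => α ^ q * (r.factorial : F) * aC (m : F) r q (i : F) with hc
    set M : ℕ → A := fun q => L (i + (((r + 1 : ℕ) : ℤ) - (q : ℤ)) * m) with hM
    set J : ℕ → F := fun q => (i : F) + ((r : F) - (q : F)) * m with hJ
    have hc0 : ∀ q, 2 * r < q → c q = 0 := fun q hq => by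
      simp only [hc, aC_eq_zero _ _ _ _ hq, mul_zero]
    have hfac : ((r + 1).factorial : F) = ((r : F) + 1) * (r.factorial : F) := by
      rw [Nat.factorial_succ]; push_cast; ring
    have hstep : ∀ q : ℕ, Y * L (i + ((r : ℤ) - (q : ℤ)) * m) - L (i + ((r : ℤ) - (q : ℤ)) * m) * Y
        = (J q - m) • M q + (2 * α * m * J q) • M (q + 1)
          + (α ^ 2 * (m : F) ^ 2 * (J q + m)) • M (q + 2) := by
      intro q
      rw [hY, ad_Y_apply L hL]
      simp only [hM, hJ]
      push_cast
      rw [show i + ((r : ℤ) - q) * m + m = i + ((r : ℤ) + 1 - q) * m by ring,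
        show i + ((r : ℤ) - q) * m - m = i + ((r : ℤ) + 1 - (q + 2)) * m by ring,
        show i + ((r : ℤ) - q) * m = i + ((r : ℤ) + 1 - (q + 1)) * m by ring]
    have hlhs : Y * (∑ q ∈ Finset.range (2 * r + 1), c q • L (i + ((r : ℤ) - (q : ℤ)) * m))
          - (∑ q ∈ Finset.range (2 * r + 1), c q • L (i + ((r : ℤ) - (q : ℤ)) * m)) * Y
        = ∑ q ∈ Finset.range (2 * r + 1), (c q * (J q - m)) • M q
          + ∑ q ∈ Finset.range (2 * r + 1), (c q * (2 * α * m * J q)) • M (q + 1)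
          + ∑ q ∈ Finset.range (2 * r + 1), (c q * (α ^ 2 * (m : F) ^ 2 * (J q + m))) • M (q + 2) := by
      rw [Finset.mul_sum, Finset.sum_mul, ← Finset.sum_sub_distrib, ← Finset.sum_add_distrib,
        ← Finset.sum_add_distrib]
      refine Finset.sum_congr rfl fun q _ => ?_
      rw [mul_smul_comm, smul_mul_assoc, ← smul_sub, hstep, smul_add, smul_add, smul_smul,
        smul_smul, smul_smul]
    -- Vanishing of `c` beyond `2r` lets the first two sums be extended, so that all three sums
    -- can be aligned on the basis vectors `M (q + 2)`, `M 1`, `M 0`.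
    have e1 : ∑ q ∈ Finset.range (2 * r + 1), (c q * (J q - m)) • M q
        = ∑ q ∈ Finset.range (2 * r + 1 + 1 + 1), (c q * (J q - m)) • M q := by
      rw [Finset.sum_range_succ _ (2 * r + 1 + 1), Finset.sum_range_succ _ (2 * r + 1),
        hc0 (2 * r + 1) (by omega), hc0 (2 * r + 1 + 1) (by omega)]
      simp
    have e2 : ∑ q ∈ Finset.range (2 * r + 1), (c q * (2 * α * m * J q)) • M (q + 1)
        = ∑ q ∈ Finset.range (2 * r + 1 + 1), (c q * (2 * α * m * J q)) • M (q + 1) := by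
      rw [Finset.sum_range_succ _ (2 * r + 1), hc0 (2 * r + 1) (by omega)]
      simp
    have t0 : α ^ 0 * ((r + 1).factorial : F) * aC (m : F) (r + 1) 0 (i : F)
        = c 0 * (J 0 - m) := by
      have h := aC_succ_zero (m : F) r (i : F)
      simp only [hc, hJ, hfac]
      push_cast
      linear_combination (r.factorial : F) * h
    have t1 : α ^ 1 * ((r + 1).factorial : F) * aC (m : F) (r + 1) 1 (i : F)
        = c 1 * (J 1 - m) + c 0 * (2 * α * m * J 0) := by
      have h := aC_succ_one (m : F) r (i : F)
      simp only [hc, hJ, hfac]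
      push_cast
      linear_combination α * (r.factorial : F) * h
    have t2 : ∀ q : ℕ,
        α ^ (q + 2) * ((r + 1).factorial : F) * aC (m : F) (r + 1) (q + 2) (i : F)
        = c (q + 2) * (J (q + 2) - m) + c (q + 1) * (2 * α * m * J (q + 1))
          + c q * (α ^ 2 * (m : F) ^ 2 * (J q + m)) := by
      intro q
      have h := aC_succ_add_two (m : F) r q (i : F)
      simp only [hc, hJ, hfac]
      push_cast
      linear_combination α ^ (q + 2) * (r.factorial : F) * h
    rw [hlhs, e1, e2, show 2 * (r + 1) + 1 = 2 * r + 1 + 1 + 1 by ring,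
      Finset.sum_range_succ' _ (2 * r + 1 + 1), Finset.sum_range_succ' _ (2 * r + 1),
      Finset.sum_range_succ' _ (2 * r + 1), Finset.sum_range_succ' _ (2 * r + 1 + 1),
      Finset.sum_range_succ' _ (2 * r + 1)]
    change _ = ∑ q ∈ Finset.range (2 * r + 1),
        (α ^ (q + 2) * ((r + 1).factorial : F) * aC (m : F) (r + 1) (q + 2) (i : F)) • M (q + 2)
      + (α ^ 1 * ((r + 1).factorial : F) * aC (m : F) (r + 1) 1 (i : F)) • M 1
      + (α ^ 0 * ((r + 1).factorial : F) * aC (m : F) (r + 1) 0 (i : F)) • M 0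
    simp only [t0, t1, t2, add_smul, Finset.sum_add_distrib, zero_add, add_assoc, Nat.reduceAdd]
    abel
end
end

section
/- For every a ∈ F, every nonnegative integer r, and every integer i, one has L_i · X_a^{<r>} = Σ_{p=0}^{r} (α^p · r!/(r−p)!) · [(p−2)m − i; p]_m · X_{a+p−i/m}^{<r−p>} · L_{i−pm}. -/
/-!
The Witt relations give the one-step rule
`L_i (X + b) = (X + b - i/m) L_i - α (m + i) L_{i-m}`, and the formula follows by induction on `r`,
multiplying by the last factor `X + a + r` on the right.

Put `c_p = ∏_{k<p} ((k-1)m - i)`, so that `[(p-2)m - i; p]_m = c_p / p!` (`gb_shift`) and the scalar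
coefficient is `α^p c_p` times the binomial coefficient `r choose p`. The rule above sends
`L_{i-pm}` to `L_{i-(p+1)m}` with the factor `α ((p-1)m - i)`, which is exactly
`α^{p+1} c_{p+1} / (α^p c_p)`. What remains is a Pascal-type recursion
(`mul_ascF_of_step`), whose correction terms cancel because
`X_{b+1}^{<n>} - X_b^{<n>} = n X_{b+1}^{<n-1>}` and
`(r - p) (r choose p) = (p + 1) (r choose (p+1))`.
-/

noncomputable section

variable {F : Type*} [Field F] [CharZero F]

section helpers

set_option linter.unusedSectionVars false

variable {A : Type*} [Ring A] [Algebra F A]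

lemma ascF_zero (x : A) (a : F) : ascF x a 0 = 1 := by
  simp [ascF]

lemma ascF_succ (x : A) (a : F) (n : ℕ) :
    ascF x a (n + 1) = ascF x a n * (x + algebraMap F A (a + (n : F))) := by
  simp [ascF, List.range_succ]

lemma ascF_succ_left (x : A) (a : F) (n : ℕ) :
    ascF x a (n + 1) = (x + algebraMap F A a) * ascF x (a + 1) n := by
  simp only [ascF, List.range_succ_eq_map, List.map_cons, List.map_map, List.prod_cons,
    Nat.cast_zero, add_zero]
  congr 3
  funext j
  simp [add_assoc, add_comm]

lemma commute_ascF (x : A) (a b : F) (n : ℕ) :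
    Commute (x + algebraMap F A b) (ascF x a n) := by
  have hx : ∀ c : F, Commute (x + algebraMap F A b) (x + algebraMap F A c) := fun c =>
    ((Commute.refl x).add_left (Algebra.commutes b x)).add_right
      (Algebra.commutes c (x + algebraMap F A b)).symm
  induction n with
  | zero => rw [ascF_zero]; exact Commute.one_right _
  | succ n ih => rw [ascF_succ]; exact ih.mul_right (hx _)

/-- The forward difference of the rising factorial in its shift parameter. For `n = 0` the
truncated `n - 1` is harmless, as the coefficient vanishes. -/
lemma ascF_shift (x : A) (b : F) (n : ℕ) :
    ascF x (b + 1) n = ascF x b n + (n : F) • ascF x (b + 1) (n - 1) := by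
  cases n with
  | zero => simp [ascF_zero]
  | succ n =>
    rw [ascF_succ_left x b n, (commute_ascF x (b + 1) b n).eq, ascF_succ, Nat.add_sub_cancel,
      Algebra.smul_def, Algebra.commutes, ← mul_add]
    congr 1
    simp only [map_add, map_one, Nat.cast_add, Nat.cast_one, map_natCast]
    abel

/-- The abstract recursion: elements `M p` that move past `X + c` at the cost of the shift `p + s`
and a multiple `e p` of `M (p + 1)` move past rising factorials by a binomial-type formula with
coefficients `d p = e 0 ⋯ e (p - 1)`. -/
lemma mul_ascF_of_step (X : A) (M : ℕ → A) (d e : ℕ → F) (s a : F)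
    (hM : ∀ (p : ℕ) (c : F), M p * (X + algebraMap F A c)
      = (X + algebraMap F A (c + p + s)) * M p + e p • M (p + 1))
    (hd0 : d 0 = 1) (hd : ∀ p, d (p + 1) = d p * e p) (r : ℕ) :
    M 0 * ascF X a r = ∑ p ∈ Finset.range (r + 1),
      ((r.choose p : F) * d p) • (ascF X (a + p + s) (r - p) * M p) := by
  induction r with
  | zero => simp [ascF_zero, hd0]
  | succ r ih =>
    rw [ascF_succ, ← mul_assoc, ih, Finset.sum_mul]
    -- The excess `p` in the shift, left over when the last factor is absorbed.
    set G : ℕ → A := fun p =>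
      ((r.choose p : F) * d p * p) • (ascF X (a + p + s) (r - p) * M p) with hG
    set U : ℕ → A := fun p =>
      ((r.choose p : F) * d p) • (ascF X (a + p + s) (r + 1 - p) * M p) with hU
    set V : ℕ → A := fun p =>
      ((r.choose p : F) * d (p + 1)) • (ascF X (a + p + s) (r - p) * M (p + 1)) with hV
    set W : ℕ → A := fun p =>
      ((r.choose p : F) * d (p + 1)) •
        (ascF X (a + (p + 1 : ℕ) + s) (r - p) * M (p + 1)) with hW
    have hleft : ∀ p ∈ Finset.range (r + 1),
        ((r.choose p : F) * d p) • (ascF X (a + p + s) (r - p) * M p)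
            * (X + algebraMap F A (a + r)) = U p + G p + V p := by
      intro p hp
      obtain ⟨n, rfl⟩ : ∃ n, r = p + n :=
        Nat.exists_eq_add_of_le (Nat.lt_succ_iff.mp (Finset.mem_range.mp hp))
      have h1 : p + n + 1 - p = n + 1 := by omega
      have h2 : p + n - p = n := by omega
      have h3 : X + algebraMap F A (a + ((p + n : ℕ) : F) + p + s)
          = (X + algebraMap F A (a + p + s + n)) + algebraMap F A (p : F) := by
        rw [add_assoc X, ← map_add]; congr 2; push_cast; ring
      simp only [hU, hG, hV, h1, h2]
      rw [smul_mul_assoc, mul_assoc, hM, h3, mul_add, add_mul, mul_add, ← mul_assoc, ← ascF_succ,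
        ← Algebra.smul_def, mul_smul_comm, mul_smul_comm, hd]
      module
    have hW' : ∀ p, W p = V p + G (p + 1) := by
      intro p
      have h1 : a + ((p + 1 : ℕ) : F) + s = a + p + s + 1 := by push_cast; ring
      have h2 : r - (p + 1) = r - p - 1 := by omega
      have h3 : (r.choose (p + 1) : F) * ((p + 1 : ℕ) : F)
          = (r.choose p : F) * ((r - p : ℕ) : F) := by
        exact_mod_cast Nat.choose_succ_right_eq r p
      simp only [hW, hV, hG, h1, h2]
      rw [mul_right_comm ((r.choose (p + 1) : ℕ) : F), h3, ascF_shift X (a + p + s) (r - p), add_mul,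
        smul_mul_assoc]
      module
    have hright : ∀ p, (((r + 1).choose (p + 1) : F) * d (p + 1)) •
        (ascF X (a + (p + 1 : ℕ) + s) (r + 1 - (p + 1)) * M (p + 1)) = W p + U (p + 1) := by
      intro p
      have h1 : r + 1 - (p + 1) = r - p := by omega
      simp only [hW, hU, h1, Nat.choose_succ_succ', Nat.cast_add (r.choose p)]
      module
    have hG0 : G 0 = 0 := by simp [hG]
    have hGt : G (r + 1) = 0 := by simp [hG]
    have hUt : U (r + 1) = 0 := by simp [hU]
    have hGs : ∑ p ∈ Finset.range (r + 1), G (p + 1) = ∑ p ∈ Finset.range (r + 1), G p := by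
      have := Finset.sum_range_succ' G (r + 1)
      rw [Finset.sum_range_succ, hG0, hGt] at this
      simpa using this.symm
    have hUs : ∑ p ∈ Finset.range (r + 1), U (p + 1) + U 0 = ∑ p ∈ Finset.range (r + 1), U p := by
      rw [← Finset.sum_range_succ' U (r + 1), Finset.sum_range_succ, hUt, add_zero]
    have hU0 : (((r + 1).choose 0 : F) * d 0) •
        (ascF X (a + (0 : ℕ) + s) (r + 1 - 0) * M 0) = U 0 := by
      simp [hU]
    rw [Finset.sum_congr rfl hleft, Finset.sum_range_succ' _ (r + 1), hU0]
    simp only [hright, hW', Finset.sum_add_distrib]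
    rw [hGs, add_assoc _ _ (U 0), hUs]
    abel

lemma gb_shift (m i : F) (p : ℕ) :
    gb (((p : F) - 2) * m - i) m p
      = (∏ k ∈ Finset.range p, (((k : F) - 1) * m - i)) / (p.factorial : F) := by
  rw [gb, ← Finset.prod_range_reflect]
  congr 1
  refine Finset.prod_congr rfl fun j hj => ?_
  have h : p - 1 - j + (j + 1) = p := by
    have := Finset.mem_range.mp hj
    omega
  have h' : ((p - 1 - j : ℕ) : F) = p - (j + 1) := by
    rw [eq_sub_iff_add_eq]; exact_mod_cast h
  rw [h']
  ring

end helpers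

/-- Witt setting, `X = (1/m)(L_0 + αm L_{−m})`:
`L_i · X_a^{<r>} = Σ_{p=0}^{r} (α^p r!/(r−p)!) [(p−2)m − i; p]_m X_{a+p−i/m}^{<r−p>} L_{i−pm}`. -/
theorem stmt4 {A : Type*} [Ring A] [Algebra F A] (L : ℤ → A)
    (hL : ∀ i j : ℤ, L i * L j - L j * L i = ((j - i : ℤ) : F) • L (i + j))
    (m : ℤ) (hm : m ≠ 0) (α : F)
    (X : A) (hX : X = ((m : F)⁻¹) • (L 0 + (α * (m : F)) • L (-m)))
    (a : F) (r : ℕ) (i : ℤ) :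
    L i * ascF X a r
      = ∑ p ∈ Finset.range (r + 1),
          (α ^ p * (r.factorial : F) / ((r - p).factorial : F) *
              gb (((p : F) - 2) * (m : F) - (i : F)) (m : F) p) •
            (ascF X (a + (p : F) - (i : F) / (m : F)) (r - p) * L (i - (p : ℤ) * m)) := by
  have hm' : (m : F) ≠ 0 := Int.cast_ne_zero.mpr hm
  have step : ∀ (j : ℤ) (c : F), L j * (X + algebraMap F A c)
      = (X + algebraMap F A (c - j / m)) * L j + (α * (-m - j)) • L (j - m) := by
    intro j c
    have h0 := sub_eq_iff_eq_add.mp (hL j 0)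
    have h1 := sub_eq_iff_eq_add.mp (hL j (-m))
    rw [add_zero] at h0
    rw [← sub_eq_add_neg] at h1
    push_cast at h0 h1
    rw [mul_add, add_mul, ← Algebra.commutes, ← Algebra.smul_def, ← Algebra.smul_def, hX,
      mul_smul_comm, mul_add, mul_smul_comm, h0, h1, smul_mul_assoc, add_mul, smul_mul_assoc]
    match_scalars <;> field_simp <;> ring
  have key := mul_ascF_of_step X (fun p : ℕ => L (i - (p : ℤ) * m))
    (fun p => α ^ p * ∏ k ∈ Finset.range p, (((k : F) - 1) * (m : F) - (i : F)))
    (fun p => α * (((p : F) - 1) * (m : F) - (i : F))) (-((i : F) / (m : F))) a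
    (by
      intro p c
      have h1 : i - (p : ℤ) * m - m = i - ((p + 1 : ℕ) : ℤ) * m := by push_cast; ring
      have h2 : c - ((i - (p : ℤ) * m : ℤ) : F) / m = c + p + -((i : F) / (m : F)) := by
        push_cast; field_simp; ring
      simp only [step, h1, h2]
      congr 2
      push_cast; ring)
    (by simp)
    (by intro p; simp only [Finset.prod_range_succ, pow_succ]; ring) r
  simp only [Nat.cast_zero, zero_mul, sub_zero] at key
  rw [key]
  refine Finset.sum_congr rfl fun p hp => ?_
  have hf : ∀ n : ℕ, (n.factorial : F) ≠ 0 := fun n => Nat.cast_ne_zero.mpr n.factorial_ne_zero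
  have hf1 := hf p
  have hf2 := hf (r - p)
  rw [gb_shift, Nat.cast_choose F (Nat.lt_succ_iff.mp (Finset.mem_range.mp hp)),
    sub_eq_add_neg (a + (p : F))]
  congr 1
  generalize ∏ k ∈ Finset.range p, (((k : F) - 1) * (m : F) - (i : F)) = c
  field_simp
end
end

section
/- For every a ∈ F, every nonnegative integer r, and every integer i, one has L_i · X_a^{[r]} = Σ_{p=0}^{r} (α^p · r!/(r−p)!) · [(p−2)m − i; p]_m · X_{a−i/m}^{[r−p]} · L_{i−pm}. -/
/-!
The Witt relations give the one-step rule
`L_i (X + c) = (X + c - i/m) L_i - α (m + i) L_{i-m}` for every scalar `c` (`witt_step`).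
Reversing the factors in the generalized binomial coefficient turns `p! [(p-2)m - i; p]_m` into
`∏_{k<p} ((k-1)m - i)`, so the claimed coefficient of the `p`-th term is
`C(r,p) α^p ∏_{k<p} ((k-1)m - i)`. In this form the identity follows by induction on `r`:
multiplying the `p`-th term on the right by `X + a - r`, the one-step rule for `L_{i-pm}` yields the
factor `X + (a - i/m) - (r-p)`, which extends `X_{a-i/m}^{[r-p]}` to `X_{a-i/m}^{[r-p+1]}`, plus a
term in `L_{i-(p+1)m}` whose scalar `α ((p-1)m - i)` extends the coefficient product from `p` to
`p+1`. The two contributions add up by Pascal's rule.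
-/

noncomputable section

variable {F : Type*} [Field F] [CharZero F]

/-- The product `∏_{k<p} α ((k-1)m - i)`, i.e. `α^p p! [(p-2)m - i; p]_m` with the factors of the
binomial coefficient listed in reverse order, so that it is extended by one factor as `p` grows. -/
def wittCoeff (α m i : F) (p : ℕ) : F :=
  ∏ k ∈ Finset.range p, (α * (((k : F) - 1) * m - i))

lemma descF_succ {A : Type*} [Ring A] [Algebra F A] (x : A) (a : F) (r : ℕ) :
    descF x a (r + 1) = descF x a r * (x + algebraMap F A (a - (r : F))) := by
  simp [descF, List.range_succ]

lemma wittCoeff_eq (α m i : F) (p : ℕ) :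
    wittCoeff α m i p = α ^ p * (p.factorial : F) * gb (((p : F) - 2) * m - i) m p := by
  have hp : (p.factorial : F) ≠ 0 := Nat.cast_ne_zero.mpr p.factorial_ne_zero
  have h : ∏ j ∈ Finset.range p, (((p : F) - 2) * m - i - (j : F) * m)
      = ∏ k ∈ Finset.range p, (((k : F) - 1) * m - i) := by
    rw [← Finset.prod_range_reflect]
    refine Finset.prod_congr rfl fun k hk => ?_
    have hk' : k + 1 ≤ p := Finset.mem_range.mp hk
    rw [Nat.sub_sub, Nat.cast_sub (by omega)]
    push_cast
    ring
  rw [gb, h, wittCoeff, Finset.prod_mul_distrib, Finset.prod_const, Finset.card_range, mul_assoc,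
    mul_div_cancel₀ _ hp]

lemma witt_step {A : Type*} [Ring A] [Algebra F A] (L : ℤ → A)
    (hL : ∀ i j : ℤ, L i * L j - L j * L i = ((j - i : ℤ) : F) • L (i + j))
    (m : ℤ) (hm : m ≠ 0) (α : F)
    (X : A) (hX : X = ((m : F)⁻¹) • (L 0 + (α * (m : F)) • L (-m))) (c : F) (i : ℤ) :
    L i * (X + algebraMap F A c)
      = (X + algebraMap F A (c - (i : F) / (m : F))) * L i
        + (α * (-(m : F) - (i : F))) • L (i - m) := by
  have hmF : (m : F) ≠ 0 := Int.cast_ne_zero.mpr hm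
  have h0 : L i * L 0 = L 0 * L i + (-(i : F)) • L i := by
    have h := hL i 0
    rw [sub_eq_iff_eq_add'] at h
    simpa using h
  have h1 : L i * L (-m) = L (-m) * L i + (-(m : F) - (i : F)) • L (i - m) := by
    have h := hL i (-m)
    rw [sub_eq_iff_eq_add'] at h
    rw [h, ← sub_eq_add_neg]
    push_cast
    rfl
  simp only [hX, Algebra.algebraMap_eq_smul_one, mul_add, add_mul, mul_smul_comm, smul_mul_assoc,
    h0, h1, mul_one, one_mul]
  match_scalars <;> field_simp
  ring

/-- The expansion with coefficients in the form `C(r,p) α^p ∏_{k<p} ((k-1)m - i)`, for which the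
induction on `r` reduces to Pascal's rule. -/
lemma witt_expansion {A : Type*} [Ring A] [Algebra F A] (L : ℤ → A)
    (hL : ∀ i j : ℤ, L i * L j - L j * L i = ((j - i : ℤ) : F) • L (i + j))
    (m : ℤ) (hm : m ≠ 0) (α : F)
    (X : A) (hX : X = ((m : F)⁻¹) • (L 0 + (α * (m : F)) • L (-m)))
    (a : F) (r : ℕ) (i : ℤ) :
    L i * descF X a r
      = ∑ p ∈ Finset.range (r + 1), ((r.choose p : F) * wittCoeff α (m : F) (i : F) p) •
          (descF X (a - (i : F) / (m : F)) (r - p) * L (i - (p : ℤ) * m)) := by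
  have hmF : (m : F) ≠ 0 := Int.cast_ne_zero.mpr hm
  induction r with
  | zero => simp [descF, wittCoeff]
  | succ r ih =>
    set b : F := a - (i : F) / (m : F) with hb
    let d : ℕ → F := wittCoeff α (m : F) (i : F)
    let T : ℕ → ℕ → A := fun s p => descF X b s * L (i - (p : ℤ) * m)
    have hterm : ∀ p ∈ Finset.range (r + 1),
        (((r.choose p : F) * d p) • T (r - p) p) * (X + algebraMap F A (a - (r : F)))
          = ((r.choose p : F) * d p) • T (r + 1 - p) p
            + ((r.choose p : F) * d (p + 1)) • T (r - p) (p + 1) := by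
      intro p hp
      have hpr : p ≤ r := Nat.lt_succ_iff.mp (Finset.mem_range.mp hp)
      have hd : d (p + 1) = d p * (α * (((p : F) - 1) * (m : F) - (i : F))) :=
        Finset.prod_range_succ _ _
      have hc : a - (r : F) - ((i - (p : ℤ) * m : ℤ) : F) / (m : F) = b - ((r - p : ℕ) : F) := by
        rw [hb, Nat.cast_sub hpr]
        push_cast
        field_simp
        ring
      have hi : i - (p : ℤ) * m - m = i - ((p + 1 : ℕ) : ℤ) * m := by
        push_cast
        ring
      have hs : -(m : F) - ((i - (p : ℤ) * m : ℤ) : F) = ((p : F) - 1) * (m : F) - (i : F) := by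
        push_cast
        ring
      simp only [T]
      rw [smul_mul_assoc, mul_assoc, witt_step L hL m hm α X hX, hc, hi, hs, mul_add, ← mul_assoc,
        ← descF_succ, ← Nat.sub_add_comm hpr, mul_smul_comm, smul_add, smul_smul, hd, mul_assoc]
    have hS : L i * descF X a (r + 1)
        = ∑ p ∈ Finset.range (r + 1), ((r.choose p : F) * d p) • T (r + 1 - p) p
          + ∑ p ∈ Finset.range (r + 1), ((r.choose p : F) * d (p + 1)) • T (r - p) (p + 1) := by
      rw [descF_succ, ← mul_assoc, ih, Finset.sum_mul, ← Finset.sum_add_distrib]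
      exact Finset.sum_congr rfl hterm
    -- The term `p = r + 1` may be added freely because `C(r, r+1) = 0`; this aligns the two sums.
    have hS1 : ∑ p ∈ Finset.range (r + 1), ((r.choose p : F) * d p) • T (r + 1 - p) p
        = ∑ p ∈ Finset.range (r + 1), ((r.choose (p + 1) : F) * d (p + 1)) • T (r - p) (p + 1)
          + d 0 • T (r + 1) 0 := by
      have h := Finset.sum_range_succ
        (fun p => ((r.choose p : F) * d p) • T (r + 1 - p) p) (r + 1)
      rw [Finset.sum_range_succ'] at h
      simpa using h.symm
    change _ = ∑ p ∈ Finset.range (r + 1 + 1), (((r + 1).choose p : F) * d p) • T (r + 1 - p) p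
    rw [hS, hS1, Finset.sum_range_succ' _ (r + 1), add_right_comm, ← Finset.sum_add_distrib]
    congr 1
    · refine Finset.sum_congr rfl fun p _ => ?_
      rw [Nat.add_sub_add_right, ← add_smul, Nat.choose_succ_succ]
      push_cast
      congr 1
      ring
    · simp

/-- Witt setting, `X = (1/m)(L_0 + αm L_{−m})`:
`L_i · X_a^{[r]} = Σ_{p=0}^{r} (α^p r!/(r−p)!) [(p−2)m − i; p]_m X_{a−i/m}^{[r−p]} L_{i−pm}`. -/
theorem stmt6 {A : Type*} [Ring A] [Algebra F A] (L : ℤ → A)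
    (hL : ∀ i j : ℤ, L i * L j - L j * L i = ((j - i : ℤ) : F) • L (i + j))
    (m : ℤ) (hm : m ≠ 0) (α : F)
    (X : A) (hX : X = ((m : F)⁻¹) • (L 0 + (α * (m : F)) • L (-m)))
    (a : F) (r : ℕ) (i : ℤ) :
    L i * descF X a r
      = ∑ p ∈ Finset.range (r + 1),
          (α ^ p * (r.factorial : F) / ((r - p).factorial : F) *
              gb (((p : F) - 2) * (m : F) - (i : F)) (m : F) p) •
            (descF X (a - (i : F) / (m : F)) (r - p) * L (i - (p : ℤ) * m)) := by
  rw [witt_expansion L hL m hm α X hX]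
  refine Finset.sum_congr rfl fun p hp => ?_
  have hpr : p ≤ r := Nat.lt_succ_iff.mp (Finset.mem_range.mp hp)
  have hp0 : (p.factorial : F) ≠ 0 := Nat.cast_ne_zero.mpr p.factorial_ne_zero
  have hq0 : ((r - p).factorial : F) ≠ 0 := Nat.cast_ne_zero.mpr (r - p).factorial_ne_zero
  rw [wittCoeff_eq, Nat.cast_choose F hpr]
  congr 1
  field_simp
end
end

section
/- For all a, d ∈ F, the identity v_a · u_d = Σ_{p≥0} binom(a+d+p−1, p) · Y^p t^p holds in the formal power series algebra A[[t]]; i.e. v_a · u_d = (1 − Yt)^{−(a+d)}. In particular (taking d = −a), u_a is invertible with inverse v_{−a}. -/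
/-!
The relation `XY − YX = Y` reads `Y X = (X − 1) Y`, so `Y ^ r` moves past a falling factorial in
`X` by shifting the argument by `−r`. Hence the `n`-th coefficient of a product of series of the
shape `Σ X_a^{[r]} Y^r t^r / r!` is a polynomial in `X` times `Y ^ n`, and both identities become
identities between falling factorials `z^{[n]} = z (z − 1) ⋯ (z − n + 1)`:

* for `v_a · u_d`, the reflection `(−1)^s z^{[s]} = (s − 1 − z)^{[s]}` turns the coefficient
  `Σ (n choose r) (X + a)^{[r]} (−1)^s (X − d − r)^{[s]}` into a Chu–Vandermonde sum, whose value
  `(a + d + n − 1)^{[n]}` is free of `X`;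
* for `u_a · v_{−a}`, the factorization `z^{[r]} (z − r)^{[s]} = z^{[r + s]}` leaves the alternating
  sum of the binomial coefficients `n choose r`.
-/

noncomputable section

variable {F : Type*} [Field F] [CharZero F]

open scoped TensorProduct

variable {A : Type*} [Ring A] [Algebra F A]

/- F_a = Σ_{r≥0} (1/r!)(X_a^{<r>} ⊗ Y^r) t^r in (A ⊗_F A)[[t]]. -/
def Fser (X Y : A) (a : F) : PowerSeries (A ⊗[F] A) :=
  PowerSeries.mk fun r => ((r.factorial : F)⁻¹) • (ascF X a r ⊗ₜ[F] Y ^ r)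

/- 𝓕_a = Σ_{r≥0} ((−1)^r/r!)(X_a^{[r]} ⊗ Y^r) t^r in (A ⊗_F A)[[t]]. -/
def Fcal (X Y : A) (a : F) : PowerSeries (A ⊗[F] A) :=
  PowerSeries.mk fun r => ((-1 : F) ^ r * (r.factorial : F)⁻¹) • (descF X a r ⊗ₜ[F] Y ^ r)

/- u_a = Σ_{r≥0} ((−1)^r/r!) X_{−a}^{[r]} Y^r t^r in A[[t]]. -/
def useries (X Y : A) (a : F) : PowerSeries A :=
  PowerSeries.mk fun r => ((-1 : F) ^ r * (r.factorial : F)⁻¹) • (descF X (-a) r * Y ^ r)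

/- v_a = Σ_{r≥0} (1/r!) X_a^{[r]} Y^r t^r in A[[t]]. -/
def vseries (X Y : A) (a : F) : PowerSeries A :=
  PowerSeries.mk fun r => ((r.factorial : F)⁻¹) • (descF X a r * Y ^ r)

/- (1 − Yt)^c = Σ_{p≥0} (−1)^p binom(c,p) Y^p t^p in A[[t]], where binom(c,p) = [c; p]_1. -/
def omYt (Y : A) (c : F) : PowerSeries A :=
  PowerSeries.mk fun p => ((-1 : F) ^ p * gb c 1 p) • Y ^ p

set_option linter.unusedSectionVars false

open Polynomial in
/-- The falling factorial `z (z − 1) ⋯ (z − n + 1)` of an element of a ring. -/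
def fallFac {R : Type*} [Ring R] (z : R) (n : ℕ) : R := aeval z (descPochhammer ℤ n)

section FallFac

variable {R : Type*} [Ring R]

lemma fallFac_zero (z : R) : fallFac z 0 = 1 := by simp [fallFac]

lemma fallFac_succ (z : R) (n : ℕ) : fallFac z (n + 1) = fallFac z n * (z - n) := by
  simp [fallFac, descPochhammer_succ_right]

lemma fallFac_mul_shift (z : R) (r s : ℕ) :
    fallFac z r * fallFac (z - r) s = fallFac z (r + s) := by
  simp [fallFac, ← descPochhammer_mul, Polynomial.aeval_comp]

lemma neg_one_pow_mul_fallFac (z : R) (s : ℕ) :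
    (-1) ^ s * fallFac z s = fallFac ((s : R) - 1 - z) s := by
  have h := Polynomial.descPochhammer_smeval_eq_ascPochhammer ((s : R) - 1 - z) s
  rw [show (s : R) - 1 - z - s + 1 = -z by abel,
    Polynomial.ascPochhammer_smeval_neg_eq_descPochhammer] at h
  simp only [fallFac, Polynomial.aeval_eq_smeval, h]
  rcases Nat.even_or_odd s with hs | hs
  · rw [hs.neg_one_pow, Int.negOnePow_even _ (by exact_mod_cast hs)]; simp
  · rw [hs.neg_one_pow, Int.negOnePow_odd _ (by exact_mod_cast hs)]; simp

/-- The Chu–Vandermonde identity for falling factorials. -/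
lemma fallFac_add {y z : R} (n : ℕ) (h : Commute y z) :
    fallFac (y + z) n = ∑ p ∈ Finset.HasAntidiagonal.antidiagonal n,
      (n.choose p.1 : R) * (fallFac y p.1 * fallFac z p.2) := by
  simpa [fallFac, Polynomial.aeval_eq_smeval] using Ring.descPochhammer_smeval_add n h

end FallFac

lemma descF_eq_fallFac (X : A) (a : F) (r : ℕ) :
    descF X a r = fallFac (X + algebraMap F A a) r := by
  induction r with
  | zero => simp [descF, fallFac_zero]
  | succ r ih =>
    rw [fallFac_succ, ← ih, descF, descF, List.range_succ]
    simp [add_sub_assoc]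

lemma gb_one_eq_fallFac (c : F) (r : ℕ) : gb c 1 r = (r.factorial : F)⁻¹ * fallFac c r := by
  have h : ∏ j ∈ Finset.range r, (c - (j : F) * 1) = fallFac c r := by
    induction r with
    | zero => simp [fallFac_zero]
    | succ r ih => rw [Finset.prod_range_succ, ih, fallFac_succ, mul_one]
  rw [gb, h, div_eq_inv_mul]

lemma algebraMap_fallFac (c : F) (r : ℕ) :
    algebraMap F A (fallFac c r) = fallFac (algebraMap F A c) r := by
  induction r with
  | zero => simp [fallFac_zero]
  | succ r ih => simp [fallFac_succ, ih]

lemma pow_mul_shift {X Y : A} (hXY : X * Y - Y * X = Y) (a : F) (r : ℕ) :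
    Y ^ r * (X + algebraMap F A a) = (X + algebraMap F A a - r) * Y ^ r := by
  have h1 : Y * X = X * Y - Y := by rw [eq_sub_iff_add_eq, ← eq_sub_iff_add_eq', hXY]
  have ha : algebraMap F A a * Y ^ r = Y ^ r * algebraMap F A a := Algebra.commutes a _
  have h2 : Y ^ r * X = X * Y ^ r - r * Y ^ r := by
    induction r with
    | zero => simp
    | succ r ih =>
      rw [pow_succ', mul_assoc, ih (Algebra.commutes a _), mul_sub, ← mul_assoc, h1,
        ← mul_assoc Y (r : A), ← Nat.cast_comm r Y]
      push_cast
      noncomm_ring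
  rw [mul_add, h2, sub_mul, add_mul, ha]
  abel

lemma pow_mul_fallFac {X Y : A} (hXY : X * Y - Y * X = Y) (a : F) (r s : ℕ) :
    Y ^ r * fallFac (X + algebraMap F A a) s = fallFac (X + algebraMap F A a - r) s * Y ^ r := by
  induction s with
  | zero => simp [fallFac_zero]
  | succ s ih =>
    have h := pow_mul_shift hXY (a - s) r
    rw [fallFac_succ, fallFac_succ, ← mul_assoc, ih, mul_assoc, mul_assoc]
    congr 1
    convert h using 2
    · simp [add_sub_assoc]
    · simp only [map_sub, map_natCast]; abel

lemma inv_factorial_mul {n : ℕ} {p : ℕ × ℕ} (hp : p ∈ Finset.HasAntidiagonal.antidiagonal n) :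
    (p.1.factorial : F)⁻¹ * (p.2.factorial : F)⁻¹ = (n.factorial : F)⁻¹ * n.choose p.1 := by
  obtain rfl := Finset.HasAntidiagonal.mem_antidiagonal.mp hp
  have h := Nat.add_choose_mul_factorial_mul_factorial p.1 p.2
  have h1 : (p.1.factorial : F) ≠ 0 := mod_cast p.1.factorial_ne_zero
  have h2 : (p.2.factorial : F) ≠ 0 := mod_cast p.2.factorial_ne_zero
  have h3 : ((p.1 + p.2).factorial : F) ≠ 0 := mod_cast (p.1 + p.2).factorial_ne_zero
  field_simp
  rw [← h, ← Nat.choose_symm_add]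
  push_cast
  ring

/-- Normal ordering of one summand in a coefficient of a product of two of the series. -/
lemma term_eq {X Y : A} (hXY : X * Y - Y * X = Y) (a b e f : F) {n : ℕ} {p : ℕ × ℕ}
    (hp : p ∈ Finset.HasAntidiagonal.antidiagonal n) :
    ((e * (p.1.factorial : F)⁻¹) • (descF X a p.1 * Y ^ p.1)) *
      ((f * (p.2.factorial : F)⁻¹) • (descF X b p.2 * Y ^ p.2)) =
    (n.factorial : F)⁻¹ • ((e * f) • ((n.choose p.1 : A) * (fallFac (X + algebraMap F A a) p.1 *
      fallFac (X + algebraMap F A b - p.1) p.2)) * Y ^ n) := by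
  have hY : fallFac (X + algebraMap F A a) p.1 * Y ^ p.1 *
      (fallFac (X + algebraMap F A b) p.2 * Y ^ p.2) =
      fallFac (X + algebraMap F A a) p.1 * fallFac (X + algebraMap F A b - p.1) p.2 * Y ^ n := by
    rw [mul_assoc, ← mul_assoc (Y ^ p.1), pow_mul_fallFac hXY, mul_assoc, ← pow_add,
      Finset.HasAntidiagonal.mem_antidiagonal.mp hp, mul_assoc]
  have hc : (n.choose p.1 : A) = algebraMap F A (n.choose p.1 : F) := by simp
  rw [descF_eq_fallFac, descF_eq_fallFac, smul_mul_smul_comm, hY, hc, ← Algebra.smul_def,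
    smul_smul, smul_mul_assoc, smul_smul, mul_mul_mul_comm, inv_factorial_mul hp]
  congr 1
  ring

theorem vseries_mul_useries {X Y : A} (hXY : X * Y - Y * X = Y) (a d : F) :
    vseries X Y a * useries X Y d
        = PowerSeries.mk (fun p => gb (a + d + (p : F) - 1) 1 p • Y ^ p) := by
  ext n
  rw [PowerSeries.coeff_mul, PowerSeries.coeff_mk]
  -- The two arguments `X + a` and `n − 1 + d − X` add up to the scalar `a + d + n − 1`.
  have hV := fallFac_add (y := X + algebraMap F A a)
    (z := algebraMap F A ((n : F) - 1 + d) - X) n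
    (Commute.sub_right (Algebra.commute_algebraMap_right _ _)
      ((Commute.refl X).add_left (Algebra.commute_algebraMap_left a X)))
  rw [show X + algebraMap F A a + (algebraMap F A ((n : F) - 1 + d) - X)
      = algebraMap F A (a + d + (n : F) - 1) by simp only [map_add, map_sub]; abel,
    ← algebraMap_fallFac] at hV
  rw [gb_one_eq_fallFac, mul_smul, Algebra.smul_def (fallFac _ n), hV, Finset.sum_mul,
    Finset.smul_sum]
  refine Finset.sum_congr rfl fun p hp => ?_
  have ht := term_eq hXY a (-d) 1 ((-1) ^ p.2) hp
  rw [one_mul, one_mul] at ht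
  rw [vseries, useries, PowerSeries.coeff_mk, PowerSeries.coeff_mk, ht]
  have hn : (n : A) = p.1 + p.2 := by
    rw [← Nat.cast_add, Finset.HasAntidiagonal.mem_antidiagonal.mp hp]
  have hr := neg_one_pow_mul_fallFac (X + algebraMap F A (-d) - p.1) p.2
  rw [show (p.2 : A) - 1 - (X + algebraMap F A (-d) - p.1) = algebraMap F A ((n : F) - 1 + d) - X
    by simp only [map_add, map_sub, map_neg, map_natCast, map_one, hn]; abel] at hr
  rw [← hr]
  have hs : ((-1 : A)) ^ p.2 = algebraMap F A ((-1) ^ p.2) := by simp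
  rw [hs, ← Algebra.smul_def, mul_smul_comm, mul_smul_comm]

theorem useries_mul_vseries_neg {X Y : A} (hXY : X * Y - Y * X = Y) (a : F) :
    useries X Y a * vseries X Y (-a) = 1 := by
  ext n
  rw [PowerSeries.coeff_mul, PowerSeries.coeff_one]
  have hterm : ∀ p ∈ Finset.HasAntidiagonal.antidiagonal n,
      PowerSeries.coeff p.1 (useries X Y a) * PowerSeries.coeff p.2 (vseries X Y (-a)) =
      (((-1) ^ p.1 * n.choose p.1 : ℤ) : F) •
        ((n.factorial : F)⁻¹ • (fallFac (X + algebraMap F A (-a)) n * Y ^ n)) := by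
    intro p hp
    have ht := term_eq hXY (-a) (-a) ((-1) ^ p.1) 1 hp
    rw [one_mul, mul_one, fallFac_mul_shift, Finset.HasAntidiagonal.mem_antidiagonal.mp hp] at ht
    rw [vseries, useries, PowerSeries.coeff_mk, PowerSeries.coeff_mk, ht]
    have hc : (n.choose p.1 : A) = algebraMap F A (n.choose p.1 : F) := by simp
    rw [hc, ← Algebra.smul_def, smul_smul, smul_mul_assoc, smul_comm]
    push_cast
    rfl
  rw [Finset.sum_congr rfl hterm, ← Finset.sum_smul, ← Int.cast_sum,
    Finset.Nat.sum_antidiagonal_eq_sum_range_succ_mk, Int.alternating_sum_range_choose]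
  split_ifs with h
  · subst h; simp [fallFac_zero]
  · simp

/-- If `XY − YX = Y`, then `v_a · u_d = Σ_{p≥0} binom(a+d+p−1,p) Y^p t^p = (1−Yt)^{−(a+d)}`
  in `A[[t]]`; in particular (`d = −a`) `u_a` is invertible with inverse `v_{−a}`. -/
theorem stmt12 (X Y : A) (hXY : X * Y - Y * X = Y) (a d : F) :
    vseries X Y a * useries X Y d
        = PowerSeries.mk (fun p => gb (a + d + (p : F) - 1) 1 p • Y ^ p) ∧
    useries X Y a * vseries X Y (-a) = 1 ∧ vseries X Y (-a) * useries X Y a = 1 := by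
  refine ⟨vseries_mul_useries hXY a d, useries_mul_vseries_neg hXY a, ?_⟩
  rw [vseries_mul_useries hXY]
  ext n
  rw [PowerSeries.coeff_mk, PowerSeries.coeff_one]
  split_ifs with h
  · subst h; simp [gb]
  · have h0 : gb (-a + a + (n : F) - 1) 1 n = 0 := by
      -- The factor with index `n − 1` of the product defining `gb (n − 1) 1 n` is zero.
      rw [gb, Finset.prod_eq_zero (i := n - 1) (Finset.mem_range.mpr (by omega)), zero_div]
      rw [Nat.cast_sub (by omega)]
      simp
    rw [h0, zero_smul]
end
end
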